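/- Hasse bound: let W be an elliptic curve over 𝔽_q (a Weierstrass curve with Δ ≠ 0). Then |#W(𝔽_q) − (q + 1)| ≤ 2√q. -/

import Mathlib

/-!
The proof is an elementary form of the argument by positivity of the degree on the endomorphism ring.
Let `F` be the finite field, `q` its order, and let `K` be the function field of `W`. In the group
`W(K)` there are the generic point `g = (x, y)` and the Frobenius point `π = (x ^ q, y ^ q)`. Here
`mπ + ng` plays the part of the endomorphism `mφ + n`, with `φ` the Frobenius, and its degree is
replaced by the height `h(P)`: the larger of the degrees of a coprime numerator and denominator of
`x(P) ∈ F(x)`. The x-coordinate of `mπ + ng` does lie in `F(x)`, because the hyperelliptic involution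
of `K` negates both `g` and `π` (`exists_rep_of_involK`).

The height satisfies the exact parallelogram law `h(P + Q) + h(P - Q) = 2h(P) + 2h(Q)`
(`Ht.add_sub`). Indeed the symmetric functions of `x(P ± Q)` are given by a quadratic map in those of
`x(P)`, `x(Q)` (`exists_sym2_add_sub`), and since `Δ` is a nonzero constant this map preserves
coprimality (`Prim.addSub`) and exactly doubles degrees (`HasDeg.addSub`).

Clearly `h(g) = 1` and `h(π) = q`, and the main computation is `h(π - g) = N`, the number of
`F`-points of `W` (`ht_frob_sub_gen`). The product of the denominators of `x(π + g)` and `x(π - g)` is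
`(x ^ q - x)²` up to a constant, so both split over `F`; a local study at each `a ∈ F` shows that the
multiplicity of `a` in the denominator of `x(π - g)` is the number of affine `F`-points with abscissa
`a` (`rootMultiplicity_denom`). The degree of this denominator is thus `N - 1`, and that of the numerator is
one more (`natDegree_num`).

Hence `(m, n) ↦ h(mπ + ng)` is a nonnegative quadratic form `qm² + cmn + n²` with `c = q + 1 - N`, and
its discriminant `c² - 4q` cannot be positive (`sq_le_of_parallelogram`).
-/

/-- The number of points of a Weierstrass curve `W` over a field `F`: the affine
`F`-points satisfying the Weierstrass equation, together with the point at infinity. -/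
noncomputable def weierstrassPointCount {F : Type} [Field F] (W : WeierstrassCurve F) : ℕ :=
  1 + Nat.card {P : F × F // W.toAffine.Equation P.1 P.2}

namespace HasseBound

open Polynomial
open WeierstrassCurve

/-! ### The addition law on x-coordinates -/

section AddSub
variable {R : Type*} [CommRing R]

/-- Mathlib's quadratic map `addSubMap` evaluated at a vector over `R`. In coordinates: if
`v = [x(P)x(Q), x(P) + x(Q), 1]`, then `addSub W v` is, up to a scalar,
`[x(P+Q)x(P-Q), x(P+Q) + x(P-Q), 1]`. -/
noncomputable def addSub (W : WeierstrassCurve R) (v : Fin 3 → R) : Fin 3 → R :=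
  fun i ↦ (W.addSubMap i).eval v

variable (W : WeierstrassCurve R) (v : Fin 3 → R)

lemma addSub_zero : addSub W v 0 =
    v 0 ^ 2 - W.b₄ * v 0 * v 2 - W.b₆ * v 1 * v 2 - W.b₈ * v 2 ^ 2 := by
  simp [addSub, addSubMap]

lemma addSub_one : addSub W v 1 =
    2 * v 1 * v 0 + W.b₂ * v 0 * v 2 + W.b₄ * v 1 * v 2 + W.b₆ * v 2 ^ 2 := by
  simp [addSub, addSubMap]

lemma addSub_two : addSub W v 2 = v 1 ^ 2 - 4 * v 0 * v 2 := by
  simp [addSub, addSubMap]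

lemma addSub_smul (c : R) (i : Fin 3) : addSub W (fun j ↦ c * v j) i = c ^ 2 * addSub W v i := by
  fin_cases i <;> simp [addSub_zero, addSub_one, addSub_two] <;> ring

/-- The coordinates of the unordered pair of two points `p`, `q` of the projective line: the
coefficients of the product of the linear forms given by `p` and `q`. -/
def sym2 (p q : Fin 2 → R) : Fin 3 → R := ![p 0 * q 0, p 0 * q 1 + p 1 * q 0, p 1 * q 1]
end AddSub

section Field
variable {K : Type*} [Field K] {E : Affine K}
open Affine.Point

/-- On the curve, `(2y + a₁x + a₃)²` is the 2-division polynomial in `x`. -/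
lemma sq_two_torsion {x y : K} (h : E.Equation x y) :
    (y - E.negY x y) ^ 2 = 4 * x ^ 3 + E.b₂ * x ^ 2 + 2 * E.b₄ * x + E.b₆ := by
  rw [Affine.equation_iff] at h
  simp only [Affine.negY, b₂, b₄, b₆]
  linear_combination 4 * h

lemma addSub_ne_zero (hE : E.Δ ≠ 0) {v : Fin 3 → K} (hv : v ≠ 0) : addSub E v ≠ 0 := by
  have : WeierstrassCurve.IsElliptic E := ⟨isUnit_iff_ne_zero.mpr hE⟩
  exact addSubMap_ne_zero E hv

variable [DecidableEq K]

/-- The chord case: for `x₁ ≠ x₂` the slopes of the two chords give `x(P+Q)` and `x(P-Q)`, and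
`addSub` computes their symmetric functions up to the common denominator `(x₁ - x₂)²`. -/
lemma addSub_of_ne {x₁ x₂ y₁ y₂ : K} (h₁ : E.Equation x₁ y₁) (h₂ : E.Equation x₂ y₂)
    (hx : x₁ ≠ x₂) :
    ∀ i, addSub E ![x₁ * x₂, x₁ + x₂, 1] i = (x₁ - x₂) ^ 2 *
      sym2 ![E.addX x₁ x₂ (E.slope x₁ x₂ y₁ y₂), 1]
        ![E.addX x₁ x₂ (E.slope x₁ x₂ y₁ (E.negY x₂ y₂)), 1] i := by
  have hd : x₁ - x₂ ≠ 0 := sub_ne_zero.mpr hx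
  rw [Affine.equation_iff] at h₁ h₂
  rw [Affine.slope_of_X_ne hx, Affine.slope_of_X_ne hx]
  set m := (y₁ - y₂) / (x₁ - x₂) with hm
  set n := (y₁ - E.negY x₂ y₂) / (x₁ - x₂) with hn
  have em : m * (x₁ - x₂) = y₁ - y₂ := by rw [hm]; field_simp
  have en : n * (x₁ - x₂) = y₁ + y₂ + E.a₁ * x₂ + E.a₃ := by
    rw [hn, Affine.negY]; field_simp; ring
  intro i
  fin_cases i
  · simp only [addSub_zero, sym2, Affine.addX, Fin.zero_eta, Matrix.cons_val]
    refine mul_left_cancel₀ (pow_ne_zero 2 hd) ?_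
    have e : (x₁ - x₂) ^ 2 * ((x₁ - x₂) ^ 2 * ((m ^ 2 + E.a₁ * m - E.a₂ - x₁ - x₂) *
        (n ^ 2 + E.a₁ * n - E.a₂ - x₁ - x₂))) =
        ((m * (x₁ - x₂)) ^ 2 + E.a₁ * (x₁ - x₂) * (m * (x₁ - x₂)) -
          (E.a₂ + x₁ + x₂) * (x₁ - x₂) ^ 2) *
        ((n * (x₁ - x₂)) ^ 2 + E.a₁ * (x₁ - x₂) * (n * (x₁ - x₂)) -
          (E.a₂ + x₁ + x₂) * (x₁ - x₂) ^ 2) := by ring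
    rw [e, em, en]
    simp only [b₄, b₆, b₈]
    grind
  · simp [addSub_one, sym2, Affine.addX]
    have e : (x₁ - x₂) ^ 2 * (m ^ 2 + E.a₁ * m - E.a₂ - x₁ - x₂ + (n ^ 2 + E.a₁ * n - E.a₂ - x₁ - x₂))
      = (m * (x₁ - x₂)) ^ 2 + E.a₁ * (x₁ - x₂) * (m * (x₁ - x₂)) + (n * (x₁ - x₂)) ^ 2 + E.a₁ * (x₁ - x₂) * (n * (x₁ - x₂)) - 2 * (E.a₂ + x₁ + x₂) * (x₁ - x₂) ^ 2 := by ring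
    rw [e, em, en]
    simp only [b₂, b₄, b₆]
    linear_combination -2 * h₁ - 2 * h₂
  · simp [addSub_two, sym2]
    ring

/-- The duplication formula for a point that is not 2-torsion. -/
lemma addSub_double {x y : K} (h : E.Equation x y) (hy : y ≠ E.negY x y) :
    addSub E ![x * x, x + x, 1] 0 =
      (y - E.negY x y) ^ 2 * E.addX x x (E.slope x x y y) := by
  have hd : y - E.negY x y ≠ 0 := sub_ne_zero.mpr hy
  rw [Affine.slope_of_Y_ne rfl hy]
  have e := (Affine.equation_iff ..).mp h
  set m := (3 * x ^ 2 + 2 * E.a₂ * x + E.a₄ - E.a₁ * y) / (y - E.negY x y) with hm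
  have em : m * (y - E.negY x y) = 3 * x ^ 2 + 2 * E.a₂ * x + E.a₄ - E.a₁ * y := by
    rw [hm]; field_simp
  simp only [addSub_zero, Affine.addX, Matrix.cons_val]
  have e' : (y - E.negY x y) ^ 2 * (m ^ 2 + E.a₁ * m - E.a₂ - x - x) =
    (m * (y - E.negY x y)) ^ 2 + E.a₁ * (m * (y - E.negY x y)) * (y - E.negY x y) -
      (E.a₂ + 2 * x) * (y - E.negY x y) ^ 2 := by ring
  rw [e', em]
  simp only [b₄, b₆, b₈, Affine.negY]
  clear_value m
  clear em hm e' hd hy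
  grind

/-- The tangent case: for `P = Q` the pair `{P + Q, P - Q}` is `{2P, 0}`, and the point at infinity
has coordinates `[1, 0]`. Points of order two are included. -/
lemma exists_sym2_double (hE : E.Δ ≠ 0) {x₁ : K} (T : E.Point) (hT : T.xRep = ![x₁, 1]) :
    ∃ c : K, c ≠ 0 ∧ ∀ i,
      addSub E ![x₁ * x₁, x₁ + x₁, 1] i = c * sym2 (T + T).xRep ![1, 0] i := by
  have hne : addSub E ![x₁ * x₁, x₁ + x₁, 1] ≠ 0 :=
    addSub_ne_zero hE fun h ↦ by simpa using congrFun h 2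
  have h2 : addSub E ![x₁ * x₁, x₁ + x₁, 1] 2 = 0 := by
    rw [addSub_two]; simp only [Matrix.cons_val]; ring
  rcases T with _ | ⟨x, y, h⟩
  · simp [← zero_def] at hT
  obtain rfl : x = x₁ := by simpa using hT
  have h1 : addSub E ![x * x, x + x, 1] 1 = (y - E.negY x y) ^ 2 := by
    rw [sq_two_torsion h.1, addSub_one]; simp only [Matrix.cons_val]; ring
  by_cases hy : y = E.negY x y
  · rw [add_self_of_Y_eq hy, xRep_zero]
    have h1' : addSub E ![x * x, x + x, 1] 1 = 0 := by rw [h1, sub_eq_zero.mpr hy]; simp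
    generalize addSub E ![x * x, x + x, 1] = v at hne h1' h2 ⊢
    refine ⟨v 0, fun h0 ↦ hne ?_, fun i ↦ ?_⟩
    · ext i
      fin_cases i
      exacts [h0, h1', h2]
    · fin_cases i
      · simp [sym2]
      · simp [sym2, h1']
      · simp [sym2, h2]
  · rw [add_self_of_Y_ne hy, xRep_some]
    have hd : y - E.negY x y ≠ 0 := sub_ne_zero.mpr hy
    refine ⟨(y - E.negY x y) ^ 2, pow_ne_zero 2 hd, fun i ↦ ?_⟩
    have h0 := addSub_double h.1 hy
    generalize addSub E ![x * x, x + x, 1] = v at h0 h1 h2 ⊢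
    generalize E.addX x x (E.slope x x y y) = X at h0 ⊢
    fin_cases i
    · simp [sym2, h0]
    · simp [sym2, h1]
    · simp [sym2, h2]

/-- On pairs of x-coordinates, `addSub` sends `{P, Q}` to `{P + Q, P - Q}`, for all points `P` and `Q`,
the point at infinity included. -/
lemma exists_sym2_add_sub (hE : E.Δ ≠ 0) (P Q : E.Point) :
    ∃ c : K, c ≠ 0 ∧ ∀ i, addSub E (sym2 P.xRep Q.xRep) i =
      c * sym2 (P + Q).xRep (P - Q).xRep i := by
  rcases P with _ | ⟨x₁, y₁, h₁⟩
  · rw [← zero_def, zero_add, zero_sub, xRep_neg, xRep_zero]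
    refine ⟨1, one_ne_zero, fun i ↦ ?_⟩
    rcases Q with _ | ⟨x₂, y₂, h₂⟩
    · rw [← zero_def]
      fin_cases i <;> simp [addSub_zero, addSub_one, addSub_two, sym2]
    · fin_cases i <;> simp [addSub_zero, addSub_one, addSub_two, sym2] <;> ring
  rcases Q with _ | ⟨x₂, y₂, h₂⟩
  · rw [← zero_def, add_zero, sub_zero, xRep_zero]
    refine ⟨1, one_ne_zero, fun i ↦ ?_⟩
    fin_cases i <;> simp [addSub_zero, addSub_one, addSub_two, sym2] <;> ring
  by_cases hx : x₁ = x₂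
  · -- Here `P = ± Q`, and the claim is the duplication formula.
    have key : ∀ T : E.Point, T.xRep = ![x₁, 1] → ∃ c : K, c ≠ 0 ∧ ∀ i,
        addSub E ![x₁ * x₁, x₁ + x₁, 1] i = c * sym2 (T + T).xRep ![1, 0] i :=
      fun T hT ↦ exists_sym2_double hE T hT
    subst hx
    rcases Affine.Y_eq_of_X_eq h₁.1 h₂.1 rfl with rfl | rfl
    · obtain ⟨c, hc, h⟩ := key (some _ _ h₁) rfl
      refine ⟨c, hc, fun i ↦ ?_⟩
      rw [sub_self, xRep_zero, ← h]
      simp [sym2]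
    · have hn : some x₁ (E.negY x₁ y₂) h₁ = -some x₁ y₂ h₂ := rfl
      obtain ⟨c, hc, h⟩ := key (some _ _ h₁) rfl
      refine ⟨c, hc, fun i ↦ ?_⟩
      have e1 : some x₁ (E.negY x₁ y₂) h₁ + some x₁ y₂ h₂ = 0 := by rw [hn, neg_add_cancel]
      have e2 : some x₁ (E.negY x₁ y₂) h₁ - some x₁ y₂ h₂ =
        some x₁ (E.negY x₁ y₂) h₁ + some x₁ (E.negY x₁ y₂) h₁ := by rw [hn, sub_eq_add_neg]
      have e3 : sym2 (0 : E.Point).xRep (some x₁ (E.negY x₁ y₂) h₁ +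
          some x₁ (E.negY x₁ y₂) h₁).xRep =
          sym2 (some x₁ (E.negY x₁ y₂) h₁ + some x₁ (E.negY x₁ y₂) h₁).xRep ![1, 0] := by
        simp [sym2, mul_comm]
      rw [e1, e2, e3, ← h]
      simp [sym2]
  · refine ⟨(x₁ - x₂) ^ 2, pow_ne_zero 2 (sub_ne_zero.mpr hx), fun i ↦ ?_⟩
    rw [sub_eq_add_neg (some _ _ h₁), neg_some, add_of_X_ne hx, add_of_X_ne hx]
    simp only [xRep_some]
    rw [← addSub_of_ne h₁.1 h₂.1 hx i]
    simp [sym2]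

end Field

/-! ### Degrees and primitivity of polynomial vectors -/

section Poly
variable {F : Type*} [Field F] {ι : Type*}

/-- The vector `v` of polynomials has degree `n`: all entries have degree at most `n`, and some entry
has a nonzero coefficient in degree `n`. In particular `v ≠ 0`. -/
def HasDeg (v : ι → F[X]) (n : ℕ) : Prop := (∀ i, (v i).natDegree ≤ n) ∧ ∃ i, (v i).coeff n ≠ 0

lemma HasDeg.unique {v : ι → F[X]} {m n : ℕ} (hm : HasDeg v m) (hn : HasDeg v n) : m = n := by
  obtain ⟨i, hi⟩ := hm.2
  obtain ⟨j, hj⟩ := hn.2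
  exact le_antisymm ((le_natDegree_of_ne_zero hi).trans (hn.1 i))
    ((le_natDegree_of_ne_zero hj).trans (hm.1 j))

lemma exists_hasDeg [Finite ι] {v : ι → F[X]} (hv : v ≠ 0) : ∃ n, HasDeg v n := by
  obtain ⟨j, hj⟩ := Function.ne_iff.mp hv
  have : Nonempty ι := ⟨j⟩
  obtain ⟨i, hi⟩ := Finite.exists_max fun i ↦ (v i).degree
  have h0 : v i ≠ 0 := by
    intro h
    have := hi j
    rw [h, degree_zero, le_bot_iff, degree_eq_bot] at this
    exact hj this
  exact ⟨(v i).natDegree, fun k ↦ natDegree_le_natDegree (hi k), i,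
    leadingCoeff_ne_zero.mpr h0⟩

lemma HasDeg.of_C_mul {v w : ι → F[X]} {n : ℕ} {u : F} (hu : u ≠ 0)
    (h : ∀ i, v i = C u * w i) (hv : HasDeg v n) : HasDeg w n := by
  refine ⟨fun i ↦ ?_, ?_⟩
  · have := hv.1 i
    rwa [h, natDegree_C_mul hu] at this
  · obtain ⟨i, hi⟩ := hv.2
    rw [h, coeff_C_mul] at hi
    exact ⟨i, right_ne_zero_of_mul hi⟩

lemma sym2_ne_zero {K : Type*} [Field K] {p q : Fin 2 → K} (hp : p ≠ 0) (hq : q ≠ 0) :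
    sym2 p q ≠ 0 := by
  contrapose! hp
  have h0 := congrFun hp 0
  have h1 := congrFun hp 1
  have h2 := congrFun hp 2
  simp [sym2] at h0 h1 h2
  have hq' : q 0 ≠ 0 ∨ q 1 ≠ 0 := by
    by_contra! h
    exact hq (by ext i; fin_cases i; exacts [h.1, h.2])
  ext i
  fin_cases i <;> simp <;> grind

/-- Taking leading forms turns `sym2` into `sym2` of two nonzero vectors over the field `F`, which is
nonzero, so degrees add. -/
lemma HasDeg.sym2 {p q : Fin 2 → F[X]} {m n : ℕ} (hp : HasDeg p m) (hq : HasDeg q n) :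
    HasDeg (sym2 p q) (m + n) := by
  have hc : ∀ i, (HasseBound.sym2 p q i).coeff (m + n) =
      HasseBound.sym2 (fun i ↦ (p i).coeff m) (fun i ↦ (q i).coeff n) i := by
    intro i
    fin_cases i <;> simp [HasseBound.sym2, coeff_mul_add_eq_of_natDegree_le, hp.1, hq.1]
  refine ⟨fun i ↦ ?_, ?_⟩
  · have h : ∀ i j, (p i * q j).natDegree ≤ m + n := fun i j ↦
      natDegree_mul_le_of_le (hp.1 i) (hq.1 j)
    fin_cases i
    · exact h 0 0
    · exact natDegree_add_le_of_degree_le (h 0 1) (h 1 0)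
    · exact h 1 1
  · simp only [hc]
    refine Function.ne_iff.mp (sym2_ne_zero ?_ ?_)
    · exact Function.ne_iff.mpr hp.2
    · exact Function.ne_iff.mpr hq.2

/-- The quadratic map `addSub` doubles degrees exactly: its value on the leading forms is nonzero,
since `addSub` over the field `F` has no nontrivial zero when `Δ ≠ 0`. -/
lemma HasDeg.addSub {W : WeierstrassCurve F} (hW : W.Δ ≠ 0) {v : Fin 3 → F[X]} {n : ℕ}
    (hv : HasDeg v n) : HasDeg (addSub (W.map C) v) (n + n) := by
  have h2 : (2 : F[X]) = C 2 := rfl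
  have h4 : (4 : F[X]) = C 4 := rfl
  have hc : ∀ i, (HasseBound.addSub (W.map C) v i).coeff (n + n) =
      HasseBound.addSub W (fun i ↦ (v i).coeff n) i := by
    intro i
    fin_cases i <;> simp only [Fin.zero_eta, Fin.mk_one, Fin.reduceFinMk, addSub_zero, addSub_one,
      addSub_two, map_b₂, map_b₄, map_b₆, map_b₈, h2, h4, coeff_add, coeff_sub, mul_assoc, sq,
      coeff_C_mul, coeff_mul_add_eq_of_natDegree_le (hv.1 _) (hv.1 _)]
  refine ⟨fun i ↦ ?_, ?_⟩
  · have h : ∀ i j, (v i * v j).natDegree ≤ n + n := fun i j ↦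
      natDegree_mul_le_of_le (hv.1 i) (hv.1 j)
    have h' : ∀ (c : F) i j, (C c * (v i * v j)).natDegree ≤ n + n := fun c i j ↦
      (natDegree_C_mul_le _ _).trans (h i j)
    fin_cases i <;> simp only [Fin.zero_eta, Fin.mk_one, Fin.reduceFinMk, addSub_zero, addSub_one,
      addSub_two, map_b₂, map_b₄, map_b₆, map_b₈, h2, h4, mul_assoc, sq]
    · exact natDegree_sub_le_of_le (natDegree_sub_le_of_le (natDegree_sub_le_of_le (h _ _) (h' _ _ _)) (h' _ _ _)) (h' _ _ _) |>.trans (by simp)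
    · exact natDegree_add_le_of_le (natDegree_add_le_of_le (natDegree_add_le_of_le (h' _ _ _) (h' _ _ _)) (h' _ _ _)) (h' _ _ _) |>.trans (by simp)
    · exact natDegree_sub_le_of_le (h _ _) (h' _ _ _) |>.trans (by simp)
  · simp only [hc]
    exact Function.ne_iff.mp (addSub_ne_zero (E := W) hW (Function.ne_iff.mpr hv.2))

/-- The entries of `v` generate the unit ideal. -/
def Prim {R : Type*} [CommRing R] (v : ι → R) : Prop := Ideal.span (Set.range v) = ⊤

lemma Prim.sym2 {R : Type*} [CommRing R] {a b c d : R} (h : IsCoprime a b) (h' : IsCoprime c d) :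
    Prim (sym2 ![a, b] ![c, d]) := by
  rw [Prim, Ideal.eq_top_iff_one]
  set I := Ideal.span (Set.range (HasseBound.sym2 ![a, b] ![c, d])) with hI
  have hm : ∀ i, HasseBound.sym2 ![a, b] ![c, d] i ∈ I := fun i ↦ Ideal.subset_span ⟨i, rfl⟩
  have h0 : a * c ∈ I := hm 0
  have h1 : a * d + b * c ∈ I := hm 1
  have h2 : b * d ∈ I := hm 2
  obtain ⟨γ, δ, e⟩ := h'
  have ha : a ^ 2 ∈ I := by
    have : a ^ 2 = (γ * a) * (a * c) + δ * (a * (a * d + b * c) - b * (a * c)) := by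
      linear_combination (-a^2) * e
    rw [this]
    exact I.add_mem (I.mul_mem_left _ h0)
      (I.mul_mem_left _ (I.sub_mem (I.mul_mem_left _ h1) (I.mul_mem_left _ h0)))
  have hb : b ^ 2 ∈ I := by
    have : b ^ 2 = (δ * b) * (b * d) + γ * (b * (a * d + b * c) - a * (b * d)) := by
      linear_combination (-b^2) * e
    rw [this]
    exact I.add_mem (I.mul_mem_left _ h2)
      (I.mul_mem_left _ (I.sub_mem (I.mul_mem_left _ h1) (I.mul_mem_left _ h2)))
  obtain ⟨m, n, e'⟩ := IsCoprime.pow (m := 2) (n := 2) h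
  rw [← e']
  exact I.add_mem (I.mul_mem_left _ ha) (I.mul_mem_left _ hb)

/-- When `Δ` is a unit, `addSub` preserves primitivity: the certificate `addSubMapCoeff_condition`
writes the fourth powers of the entries of `v` as combinations of the entries of `addSub W v`. -/
lemma Prim.addSub {R : Type*} [CommRing R] {W : WeierstrassCurve R} (hW : IsUnit W.Δ)
    {v : Fin 3 → R} (hv : Prim v) : Prim (addSub W v) := by
  have : W.IsElliptic := ⟨hW⟩
  have h4 := Ideal.span_pow_eq_top _ hv 4
  rw [Prim, eq_top_iff, ← h4, Ideal.span_le]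
  rintro _ ⟨_, ⟨i, rfl⟩, rfl⟩
  simp only [SetLike.mem_coe]
  rw [← addSubMapCoeff_condition W v i]
  exact Ideal.sum_mem _ fun j _ ↦ Ideal.mul_mem_left _ _ (Ideal.subset_span ⟨j, rfl⟩)

/-- Primitive vectors over `R` which are proportional over a field `K` containing `R` differ by a
unit of `R`. -/
lemma exists_unit {R K : Type*} [CommRing R] [Field K] [Algebra R K]
    (hinj : Function.Injective (algebraMap R K)) {n : ℕ} {v w : Fin n → R} (hv : Prim v) (hw : Prim w)
    {k : K} (hk : k ≠ 0) (h : ∀ i, algebraMap R K (v i) = k * algebraMap R K (w i)) :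
    ∃ u : R, IsUnit u ∧ ∀ i, v i = u * w i := by
  have aux : ∀ {v w : Fin n → R} {k : K}, Prim w →
      (∀ i, algebraMap R K (v i) = k * algebraMap R K (w i)) → ∃ u, algebraMap R K u = k := by
    intro v w k hw h
    have h1 : (1 : R) ∈ Ideal.span (Set.range w) := by rw [hw]; trivial
    obtain ⟨c, hc⟩ := (Ideal.mem_span_range_iff_exists_fun).mp h1
    refine ⟨∑ i, c i * v i, ?_⟩
    have e := congrArg (fun z ↦ k * algebraMap R K z) hc
    simp only [map_sum, map_mul, map_one, mul_one, Finset.mul_sum] at e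
    rw [map_sum]
    simp only [map_mul, h]
    exact (Finset.sum_congr rfl fun i _ ↦ by ring).trans e
  obtain ⟨u, rfl⟩ := aux hw h
  obtain ⟨u', hu'⟩ := aux (k := (algebraMap R K u)⁻¹) hv
    (w := v) (v := w)
    (fun i ↦ by rw [h i, inv_mul_cancel_left₀ hk])
  refine ⟨u, .of_mul_eq_one u' (hinj ?_), fun i ↦ hinj ?_⟩
  · rw [map_mul, hu', map_one, mul_inv_cancel₀ hk]
  · rw [h, map_mul]

end Poly

/-! ### Heights of points over the function field -/

section FunctionField
open scoped Classical
variable {F : Type*} [Field F] {W : Affine F}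

/-- The points of `W` over its own function field. -/
abbrev GenPoint (W : Affine F) : Type _ := (Affine.baseChange W W.FunctionField).Point

lemma algebraMap_K_injective : Function.Injective (algebraMap F[X] W.FunctionField) := by
  rw [IsScalarTower.algebraMap_eq F[X] W.CoordinateRing W.FunctionField,
    RingHom.coe_comp]
  exact (IsFractionRing.injective W.CoordinateRing W.FunctionField).comp (FaithfulSMul.algebraMap_injective _ _)

/-- The vector `v` consists of a coprime numerator and denominator, in `F[X]`, of the x-coordinate of
`P`. The point at infinity is represented by `[1, 0]`. Only points whose x-coordinate lies in `F(x)`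
have such a representation. -/
def Rep (P : GenPoint W) (v : Fin 2 → F[X]) : Prop :=
  IsCoprime (v 0) (v 1) ∧ ∃ c : W.FunctionField, c ≠ 0 ∧
    ∀ i, P.xRep i = c * algebraMap F[X] W.FunctionField (v i)

lemma sym2_smul {R S : Type*} [CommRing R] [CommRing S] [Algebra R S] (c d : S)
    (v w : Fin 2 → R) (i : Fin 3) :
    sym2 (fun i ↦ c * algebraMap R S (v i)) (fun i ↦ d * algebraMap R S (w i)) i =
      (c * d) * algebraMap R S (sym2 v w i) := by
  fin_cases i <;> simp [sym2] <;> ring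

lemma addSub_map {R S : Type*} [CommRing R] [CommRing S] (f : R →+* S) (W : WeierstrassCurve R)
    (v : Fin 3 → R) (i : Fin 3) :
    addSub (W.map f) (fun j ↦ f (v j)) i = f (addSub W v i) := by
  fin_cases i <;> simp [addSub_zero, addSub_one, addSub_two, map_ofNat]

lemma baseChange_eq : Affine.baseChange W W.FunctionField =
    (WeierstrassCurve.map W C).map (algebraMap F[X] W.FunctionField) := by
  rw [WeierstrassCurve.map_map, ← Polynomial.algebraMap_eq, ← IsScalarTower.algebraMap_eq]
  rfl

/-- Since both sides are primitive, the scalar relating `addSub` of the representations of `P`, `Q` to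
the representations of `P + Q`, `P - Q` is a constant: no factor cancels. -/
lemma Rep.add_sub (hW : W.Δ ≠ 0) {P Q : GenPoint W} {v w r s : Fin 2 → F[X]} (hP : Rep P v)
    (hQ : Rep Q w) (hA : Rep (P + Q) r) (hS : Rep (P - Q) s) :
    ∃ u : F, u ≠ 0 ∧ ∀ i, addSub (WeierstrassCurve.map W C) (sym2 v w) i = C u * sym2 r s i := by
  obtain ⟨c₁, hc₁, h₁⟩ := hP.2
  obtain ⟨c₂, hc₂, h₂⟩ := hQ.2
  obtain ⟨c₃, hc₃, h₃⟩ := hA.2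
  obtain ⟨c₄, hc₄, h₄⟩ := hS.2
  obtain ⟨c, hc, h⟩ := exists_sym2_add_sub (E := Affine.baseChange W W.FunctionField)
    (by simpa [baseChange_eq, WeierstrassCurve.map_map] using hW) P Q
  have prim : ∀ {v w : Fin 2 → F[X]}, IsCoprime (v 0) (v 1) → IsCoprime (w 0) (w 1) →
      Prim (sym2 v w) := fun {v w} hv hw ↦ Prim.sym2 hv hw
  have hΔ : IsUnit (WeierstrassCurve.map W (C : F →+* F[X])).Δ := by
    simpa using isUnit_iff_ne_zero.mpr hW
  obtain ⟨u, hu, h'⟩ := exists_unit (K := W.FunctionField) algebraMap_K_injective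
    ((prim hP.1 hQ.1).addSub hΔ) (prim hA.1 hS.1)
    (k := ((c₁ * c₂) ^ 2)⁻¹ * (c * (c₃ * c₄))) (by positivity) (fun i ↦ by
      have e := h i
      rw [funext h₁, funext h₂, funext h₃, funext h₄, sym2_smul] at e
      rw [funext (sym2_smul c₁ c₂ v w), addSub_smul, baseChange_eq, addSub_map] at e
      have h0 : (c₁ * c₂) ^ 2 ≠ 0 := pow_ne_zero 2 (mul_ne_zero hc₁ hc₂)
      rw [mul_assoc, mul_assoc c, ← e, inv_mul_cancel_left₀ h0])
  obtain ⟨u, hu0, rfl⟩ := isUnit_iff.mp hu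
  exact ⟨u, hu0.ne_zero, h'⟩

/-- The height of `P` is `n`: the larger of the degrees of the numerator and of the denominator of
its x-coordinate. This is a relation rather than a function, as not every point over the function
field has an x-coordinate in `F(x)`. -/
def Ht (P : GenPoint W) (n : ℕ) : Prop := ∃ v, Rep P v ∧ HasDeg v n

lemma Rep.exists_ht {P : GenPoint W} {v : Fin 2 → F[X]} (h : Rep P v) : ∃ n, HasDeg v n := by
  refine exists_hasDeg fun h0 ↦ ?_
  have := h.1
  simp [h0, isCoprime_zero_left] at this

/-- The exact parallelogram law `h(P + Q) + h(P - Q) = 2h(P) + 2h(Q)`. -/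
lemma Ht.add_sub (hW : W.Δ ≠ 0) {P Q : GenPoint W} {k l m n : ℕ} (hP : Ht P k)
    (hQ : Ht Q l) (hA : Ht (P + Q) m) (hS : Ht (P - Q) n) : m + n = 2 * k + 2 * l := by
  obtain ⟨v, hv, hk⟩ := hP
  obtain ⟨w, hw, hl⟩ := hQ
  obtain ⟨r, hr, hm⟩ := hA
  obtain ⟨s, hs, hn⟩ := hS
  obtain ⟨u, hu, h⟩ := hv.add_sub hW hw hr hs
  have := ((hk.sym2 hl).addSub hW).of_C_mul hu h
  have := this.unique (hm.sym2 hn)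
  omega

end FunctionField

/-! ### The hyperelliptic involution -/

section Involution
open scoped Classical
variable {F : Type*} [Field F] {W : Affine F}

variable (W) in
/-- The class of `Y` in the coordinate ring. -/
noncomputable abbrev yR : W.CoordinateRing := AdjoinRoot.root W.polynomial

lemma eval₂_polynomial {S : Type*} [CommRing S] (W : Affine F) (f : F[X] →+* S) (y : S) :
    W.polynomial.eval₂ f y = y ^ 2 + f (C W.a₁ * X + C W.a₃) * y -
      f (X ^ 3 + C W.a₂ * X ^ 2 + C W.a₄ * X + C W.a₆) := by
  simp only [Affine.polynomial, eval₂_sub, eval₂_add, eval₂_mul, eval₂_pow, eval₂_X, eval₂_C]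

lemma yR_sq : yR W ^ 2 + algebraMap F[X] _ (C W.a₁ * X + C W.a₃) * yR W =
    algebraMap F[X] _ (X ^ 3 + C W.a₂ * X ^ 2 + C W.a₄ * X + C W.a₆) := by
  have h := AdjoinRoot.eval₂_root W.polynomial
  exact sub_eq_zero.mp ((eval₂_polynomial W (algebraMap F[X] W.CoordinateRing) (yR W)).symm.trans h)

variable (W) in
/-- The hyperelliptic involution `y ↦ -y - a₁x - a₃` of the coordinate ring. -/
noncomputable def invol : W.CoordinateRing →ₐ[F[X]] W.CoordinateRing :=
  AdjoinRoot.liftAlgHom W.polynomial (Algebra.ofId F[X] W.CoordinateRing)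
    (-yR W - algebraMap F[X] _ (C W.a₁ * X + C W.a₃)) (by
      have h := yR_sq (W := W)
      simp only [Affine.polynomial, eval₂_sub, eval₂_add, eval₂_mul, eval₂_pow, eval₂_X, eval₂_C]
      simp only [RingHom.coe_coe, Algebra.ofId_apply]
      linear_combination h)

lemma invol_yR : invol W (yR W) = -yR W - algebraMap F[X] _ (C W.a₁ * X + C W.a₃) :=
  AdjoinRoot.liftAlgHom_root ..

/-- The coordinate ring is spanned by `1` and `y` over `F[X]`. -/
lemma exists_rep (r : W.CoordinateRing) : ∃ p q : F[X], r = algebraMap _ _ p + algebraMap _ _ q * yR W := by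
  obtain ⟨p, q, h⟩ := Affine.CoordinateRing.exists_smul_basis_eq r
  exact ⟨p, q, by rw [← h, Algebra.smul_def, Algebra.smul_def, mul_one]; rfl⟩

/-- `1` and `y` are linearly independent over `F[X]`. -/
lemma rep_eq_zero {p q : F[X]} (h : algebraMap _ _ p + algebraMap _ _ q * yR W = 0) : p = 0 ∧ q = 0 := by
  refine Affine.CoordinateRing.smul_basis_eq_zero (W' := W) ?_
  rw [Algebra.smul_def, Algebra.smul_def, mul_one]; exact h

lemma invol_invol (r : W.CoordinateRing) : invol W (invol W r) = r := by
  obtain ⟨p, q, rfl⟩ := exists_rep r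
  simp only [map_add, map_mul, AlgHom.commutes, invol_yR, map_sub, map_neg]
  ring

lemma invol_injective : Function.Injective (invol W) :=
  Function.LeftInverse.injective invol_invol

/-- The norm of an element of the coordinate ring lies in `F[X]`. -/
lemma mul_invol (r : W.CoordinateRing) : ∃ p : F[X], r * invol W r = algebraMap _ _ p := by
  obtain ⟨p, q, rfl⟩ := exists_rep r
  refine ⟨p ^ 2 - p * q * (C W.a₁ * X + C W.a₃) - q ^ 2 * (X ^ 3 + C W.a₂ * X ^ 2 + C W.a₄ * X + C W.a₆), ?_⟩
  have h := yR_sq (W := W)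
  rw [map_sub, map_mul _ (q ^ 2), ← h]
  simp only [map_add, map_mul, AlgHom.commutes, invol_yR, map_sub, map_pow]
  ring

/-- The invariants of the involution are the polynomials in `x`. In characteristic two this uses
that `a₁` and `a₃` do not both vanish. -/
lemma fixed_of_invol (hW : W.Δ ≠ 0) {r : W.CoordinateRing} (h : invol W r = r) :
    ∃ p : F[X], r = algebraMap _ _ p := by
  obtain ⟨p, q, rfl⟩ := exists_rep r
  refine ⟨p, ?_⟩
  suffices q = 0 by simp [this]
  by_contra hq
  simp only [map_add, map_mul, AlgHom.commutes, invol_yR] at h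
  -- Comparing coordinates in the basis `1`, `y` gives `q (a₁x + a₃) = 0` and `2q = 0`.
  obtain ⟨h1, h2⟩ := rep_eq_zero (W := W) (p := q * (C W.a₁ * X + C W.a₃)) (q := 2 * q) (by
    simp only [map_mul, map_ofNat, map_add] at h ⊢
    linear_combination -h)
  have h2 : (2 : F) = 0 := by
    have : (2 : F[X]) = 0 := by simpa [hq] using h2
    simpa using congrArg (coeff · 0) this
  have h1 : C W.a₁ * X + C W.a₃ = 0 := by simpa [hq] using h1
  have ha1 : W.a₁ = 0 := by simpa using congrArg (coeff · 1) h1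
  have ha3 : W.a₃ = 0 := by simpa using congrArg (coeff · 0) h1
  -- In characteristic two with `a₁ = a₃ = 0`, the discriminant vanishes.
  apply hW
  simp only [WeierstrassCurve.Δ, b₂, b₄, b₆, b₈, ha1, ha3]
  linear_combination (-16 * W.a₂ ^ 2 * (W.a₂ * W.a₆ * 2 ) +8* W.a₂ ^ 2 * W.a₄ ^ 2 - 32 * W.a₄ ^ 3 - 216 * W.a₆ ^ 2 + 144 * W.a₂ * W.a₄ * W.a₆) * h2

variable (W) in
/-- The hyperelliptic involution of the function field. -/
noncomputable def involK : W.FunctionField →ₐ[F] W.FunctionField :=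
  (IsFractionRing.liftAlgHom (K := W.FunctionField) (R := F[X])
    (g := (Algebra.algHom F[X] W.CoordinateRing W.FunctionField).comp (invol W))
    ((IsFractionRing.injective W.CoordinateRing W.FunctionField).comp invol_injective)).restrictScalars F

lemma involK_algebraMap (r : W.CoordinateRing) :
    involK W (algebraMap _ _ r) = algebraMap _ _ (invol W r) := by
  exact IsFractionRing.lift_algebraMap (A := W.CoordinateRing)
    (g := ((Algebra.algHom F[X] W.CoordinateRing W.FunctionField).comp (invol W)).toRingHom)
    ((IsFractionRing.injective W.CoordinateRing W.FunctionField).comp invol_injective) r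

lemma involK_algebraMap_poly (p : F[X]) :
    involK W (algebraMap F[X] _ p) = algebraMap F[X] _ p := by
  rw [IsScalarTower.algebraMap_apply F[X] W.CoordinateRing, involK_algebraMap, AlgHom.commutes]

/-- An element of the function field fixed by the involution is a quotient of polynomials in `x`. -/
lemma exists_of_involK_eq (hW : W.Δ ≠ 0) {z : W.FunctionField} (h : involK W z = z) :
    ∃ a b : F[X], b ≠ 0 ∧ z * algebraMap _ _ b = algebraMap _ _ a := by
  obtain ⟨r, s, hs, rfl⟩ := IsFractionRing.div_surjective (A := W.CoordinateRing) z
  have hs0 : s ≠ 0 := nonZeroDivisors.ne_zero hs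
  obtain ⟨b, hb⟩ := mul_invol s
  have hb0 : b ≠ 0 := by
    rintro rfl
    rw [map_zero, mul_eq_zero, map_eq_zero_iff _ invol_injective] at hb
    tauto
  have inj := IsFractionRing.injective W.CoordinateRing W.FunctionField
  have hs' : algebraMap _ W.FunctionField s ≠ 0 := by rwa [Ne, map_eq_zero_iff _ inj]
  have e : algebraMap _ W.FunctionField r / algebraMap _ _ s * algebraMap F[X] _ b =
      algebraMap _ _ (r * invol W s) := by
    rw [IsScalarTower.algebraMap_apply F[X] W.CoordinateRing W.FunctionField, ← hb, map_mul, map_mul]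
    field_simp
  have h' := congrArg (involK W) e
  rw [map_mul, h, involK_algebraMap_poly, involK_algebraMap, e] at h'
  obtain ⟨a, ha⟩ := fixed_of_invol hW (inj h').symm
  exact ⟨a, b, hb0, by rw [e, ha, ← IsScalarTower.algebraMap_apply]⟩

/-- If the involution acts on `P` as negation, then `x(P)` is invariant and so lies in `F(x)`. -/
lemma exists_rep_of_involK (hW : W.Δ ≠ 0) {P : GenPoint W}
    (h : Affine.Point.map (W' := W) (involK W) P = -P) : ∃ v, Rep P v := by
  rcases P with _ | ⟨x, y, hxy⟩
  · refine ⟨![1, 0], by simp [isCoprime_one_left], 1, one_ne_zero, fun i ↦ ?_⟩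
    change (0 : GenPoint W).xRep i = _
    rw [Affine.Point.xRep_zero]
    fin_cases i <;> simp
  · rw [Affine.Point.map_some, Affine.Point.neg_some, Affine.Point.some.injEq] at h
    obtain ⟨a, b, hb, e⟩ := exists_of_involK_eq hW h.1
    obtain ⟨d, a', b', hd, hab, rfl, rfl⟩ : ∃ d a' b' : F[X], d ≠ 0 ∧ IsCoprime a' b' ∧ a = d * a' ∧ b = d * b' := by
      have hd : GCDMonoid.gcd a b ≠ 0 := fun h ↦ hb ((gcd_eq_zero_iff _ _).mp h).2
      exact ⟨_, _, _, hd, isCoprime_div_gcd_div_gcd (p := a) hb,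
        (EuclideanDomain.mul_div_cancel' hd (gcd_dvd_left a b)).symm,
        (EuclideanDomain.mul_div_cancel' hd (gcd_dvd_right a b)).symm⟩
    have inj := algebraMap_K_injective (W := W)
    have hb' : algebraMap F[X] W.FunctionField b' ≠ 0 := by
      rw [Ne, map_eq_zero_iff _ inj]; exact right_ne_zero_of_mul hb
    have hd' : algebraMap F[X] W.FunctionField d ≠ 0 := by
      rwa [Ne, map_eq_zero_iff _ inj]
    refine ⟨![a', b'], hab, (algebraMap F[X] W.FunctionField b')⁻¹, inv_ne_zero hb', fun i ↦ ?_⟩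
    rw [Affine.Point.xRep_some]
    have e' : x * algebraMap _ _ b' = algebraMap _ _ a' := by
      rw [map_mul, map_mul] at e
      apply mul_left_cancel₀ hd'
      linear_combination e
    fin_cases i
    · simp [← e']; field_simp
    · simp [hb']

end Involution

/-! ### Fibres of the x-coordinate over a finite field -/

section Count
variable {F : Type*} [Field F] {W : Affine F}

lemma eq_or_eq_negY {K : Type*} [Field K] {E : Affine K} {x y z : K} (hy : E.Equation x y) (hz : E.Equation x z) :
    z = y ∨ z = E.negY x y := by
  rw [Affine.equation_iff] at hy hz
  have : (z - y) * (z - E.negY x y) = 0 := by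
    simp only [Affine.negY]
    linear_combination hz - hy
  simpa [sub_eq_zero] using this

lemma negY_equation {E : Affine F} {x y : F} (h : E.Equation x y) : E.Equation x (E.negY x y) :=
  Affine.equation_neg ..|>.mpr h

lemma card_fibre_of_ne {x y : F} (h : W.Equation x y) (hne : y ≠ W.negY x y) :
    Nat.card {y : F // W.Equation x y} = 2 := by
  classical
  have : {z : F | W.Equation x z} = {y, W.negY x y} := by
    ext z
    refine ⟨fun hz ↦ eq_or_eq_negY h hz, ?_⟩
    rintro (rfl | rfl)
    · exact h
    · exact negY_equation h
  change Nat.card ({z : F | W.Equation x z} : Set F) = 2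
  rw [this, Nat.card_coe_set_eq, Set.ncard_pair hne]

lemma card_fibre_of_eq {x y : F} (h : W.Equation x y) (he : y = W.negY x y) :
    Nat.card {y : F // W.Equation x y} = 1 := by
  have : {z : F | W.Equation x z} = {y} := by
    ext z
    refine ⟨fun hz ↦ ?_, ?_⟩
    · rcases eq_or_eq_negY h hz with h | h
      · exact h
      · exact h.trans he.symm
    rintro rfl
    exact h
  change Nat.card ({z : F | W.Equation x z} : Set F) = 1
  rw [this, Nat.card_coe_set_eq, Set.ncard_singleton]

variable {L : Type*} [Field L] [Algebra F L]

/-- Over an algebraically closed field, every abscissa is that of some point. -/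
lemma exists_root [IsAlgClosed L] (W : Affine F) (x : L) : ∃ y, (Affine.baseChange W L).Equation x y := by
  set E := Affine.baseChange W L
  obtain ⟨y, hy⟩ := IsAlgClosed.exists_root (C 1 * X ^ 2 + C (E.a₁ * x + E.a₃) * X +
    C (-(x ^ 3 + E.a₂ * x ^ 2 + E.a₄ * x + E.a₆))) (by rw [degree_quadratic one_ne_zero]; decide)
  refine ⟨y, (Affine.equation_iff ..).mpr ?_⟩
  simp only [IsRoot, eval_add, eval_mul, eval_C, eval_pow, eval_X] at hy
  linear_combination hy

lemma equation_map {x y : F} : (Affine.baseChange W L).Equation (algebraMap F L x) (algebraMap F L y) ↔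
    W.Equation x y :=
  Affine.map_equation W (algebraMap F L).injective x y

variable [Fintype F]

local notation "q" => Fintype.card F

lemma X_pow_sub_X_eq_prod : (X ^ q - X : F[X]) = ∏ a : F, (X - C a) := by
  have h1 : 1 < q := Fintype.one_lt_card
  have := prod_multiset_X_sub_C_of_monic_of_roots_card_eq (p := (X ^ q - X : F[X]))
    (monic_X_pow_sub (by rw [degree_X]; exact_mod_cast h1))
    (by rw [FiniteField.roots_X_pow_card_sub_X, FiniteField.X_pow_card_sub_X_natDegree_eq _ h1]; rfl)
  rw [FiniteField.roots_X_pow_card_sub_X] at this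
  exact this.symm

/-- The elements of an extension of `F` fixed by the `q`-power map are those of `F`. -/
lemma exists_of_pow_card_eq {L : Type*} [Field L] [Algebra F L] {y : L} (h : y ^ q = y) :
    ∃ z : F, algebraMap F L z = y := by
  have := congrArg (aeval y) (X_pow_sub_X_eq_prod (F := F))
  simp only [map_sub, map_pow, aeval_X, h, sub_self, map_prod, aeval_C] at this
  obtain ⟨z, -, hz⟩ := Finset.prod_eq_zero_iff.mp this.symm
  exact ⟨z, (sub_eq_zero.mp hz).symm⟩

/-- The Frobenius map preserves the fibre over a rational abscissa. -/
lemma equation_pow {x : F} {y : L} (h : (Affine.baseChange W L).Equation (algebraMap F L x) y) :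
    (Affine.baseChange W L).Equation (algebraMap F L x) (y ^ q) := by
  have := (Affine.baseChange_equation W (FiniteField.frobeniusAlgHom F L).injective (algebraMap F L x) y).mpr h
  simpa [FiniteField.coe_frobeniusAlgHom, ← map_pow, FiniteField.pow_card] using this

end Count

/-! ### The denominator of x(π - g) -/

section Denominator
variable {F : Type*} [Field F] {W : Affine F}

lemma eval_ne_zero_of_coprime {a b : F[X]} (h : IsCoprime a b) {x : F} (hb : b.eval x = 0) : a.eval x ≠ 0 := by
  intro ha
  obtain ⟨c, d, e⟩ := h
  simpa [ha, hb] using congrArg (eval x) e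

variable {L : Type*} [Field L] [Algebra F L]

lemma sub_negY_sq_baseChange {x : F} {y : L}
    (h : (Affine.baseChange W L).Equation (algebraMap F L x) y) :
    (y - (Affine.baseChange W L).negY (algebraMap F L x) y) ^ 2 =
      algebraMap F L (4 * x ^ 3 + W.b₂ * x ^ 2 + 2 * W.b₄ * x + W.b₆) := by
  have hE : Affine.baseChange W L = WeierstrassCurve.map W (algebraMap F L) := rfl
  have := sq_two_torsion h
  rw [this, hE]
  simp [map_ofNat]

variable [Fintype F]

local notation "q" => Fintype.card F

variable {u : F} {r s : Fin 2 → F[X]}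

/-- Throughout this part, `r` and `s` represent `x(π + g)` and `x(π - g)`, and the hypothesis `h` is the
conclusion of `Rep.add_sub` for `π` and `g`. Its third coordinate gives the product of the
denominators. -/
lemma denom_mul (h : ∀ i, addSub (WeierstrassCurve.map W C) (sym2 ![X ^ q, 1] ![X, 1]) i =
    C u * sym2 r s i) : C u * (r 1 * s 1) = (X ^ q - X) ^ 2 := by
  have := h 2
  rw [addSub_two] at this
  simp only [sym2, Matrix.cons_val] at this
  linear_combination -this

lemma cross_eq (h : ∀ i, addSub (WeierstrassCurve.map W C) (sym2 ![X ^ q, 1] ![X, 1]) i =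
    C u * sym2 r s i) : C u * (r 0 * s 1 + r 1 * s 0) =
      2 * (X ^ q + X) * (X ^ q * X) + C W.b₂ * (X ^ q * X) + C W.b₄ * (X ^ q + X) + C W.b₆ := by
  have := h 1
  rw [addSub_one] at this
  simp only [sym2, Matrix.cons_val, WeierstrassCurve.map_b₂, WeierstrassCurve.map_b₄, WeierstrassCurve.map_b₆] at this
  linear_combination -this

lemma num_mul (h : ∀ i, addSub (WeierstrassCurve.map W C) (sym2 ![X ^ q, 1] ![X, 1]) i =
    C u * sym2 r s i) : C u * (r 0 * s 0) =
      (X ^ q * X) ^ 2 - (C W.b₄ * (X ^ q * X) + C W.b₆ * (X ^ q + X) + C W.b₈) := by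
  have := h 0
  rw [addSub_zero] at this
  simp only [sym2, Matrix.cons_val, WeierstrassCurve.map_b₈, WeierstrassCurve.map_b₄, WeierstrassCurve.map_b₆] at this
  linear_combination -this

/-- Each element of `F` is a root of total multiplicity two of the two denominators. -/
lemma rootMultiplicity_add {a b : F[X]} (h : C u * (a * b) = (X ^ q - X) ^ 2) (x : F) :
    a.rootMultiplicity x + b.rootMultiplicity x = 2 := by
  classical
  have h1 : 1 < q := Fintype.one_lt_card
  have h0 : (X ^ q - X : F[X]) ≠ 0 := FiniteField.X_pow_card_sub_X_ne_zero _ h1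
  have hab : C u * (a * b) ≠ 0 := by rw [h]; exact pow_ne_zero _ h0
  have e := congrArg (rootMultiplicity x) h
  rw [rootMultiplicity_mul hab, rootMultiplicity_C, zero_add, rootMultiplicity_mul (right_ne_zero_of_mul hab),
    sq, rootMultiplicity_mul (mul_ne_zero h0 h0)] at e
  rw [e, ← count_roots, FiniteField.roots_X_pow_card_sub_X, Multiset.count_univ]

/-- The multiplicity of `x ∈ F` as a root of the denominator of `x(π - g)` is the number of rational
points above it. The hypotheses `hp` and `hm` say that, at a point `(x, y)` over `L`, the denominator of
`x(π + g)` vanishes unless `y ^ q = y`, and that of `x(π - g)` vanishes unless `y ^ q` is the other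
root. -/
lemma rootMultiplicity_denom [IsAlgClosed L] (hu : u ≠ 0)
    (h : ∀ i, addSub (WeierstrassCurve.map W C) (sym2 ![X ^ q, 1] ![X, 1]) i = C u * sym2 r s i)
    (hr : IsCoprime (r 0) (r 1)) (hs : IsCoprime (s 0) (s 1))
    (hp : ∀ (x : F) (y : L), (Affine.baseChange W L).Equation (algebraMap F L x) y →
      algebraMap F L ((r 1).eval x) * (y ^ q - y) ^ 2 = 0)
    (hm : ∀ (x : F) (y : L), (Affine.baseChange W L).Equation (algebraMap F L x) y →
      algebraMap F L ((s 1).eval x) *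
        (y ^ q - (Affine.baseChange W L).negY (algebraMap F L x) y) ^ 2 = 0) (x : F) :
    (s 1).rootMultiplicity x = Nat.card {y : F // W.Equation x y} := by
  have hsum := rootMultiplicity_add (denom_mul h) x
  have h0 : r 1 * s 1 ≠ 0 := by
    intro h'
    have := denom_mul h
    rw [h', mul_zero] at this
    exact pow_ne_zero 2 (FiniteField.X_pow_card_sub_X_ne_zero F Fintype.one_lt_card) this.symm
  have hr0 := rootMultiplicity_pos (left_ne_zero_of_mul h0) (x := x)
  have hs0 := rootMultiplicity_pos (right_ne_zero_of_mul h0) (x := x)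
  rw [IsRoot] at hr0 hs0
  have hcross := congrArg (eval x) (cross_eq h)
  have hprod := congrArg (eval x) (denom_mul h)
  simp only [eval_mul, eval_add, eval_C, eval_pow, eval_X, FiniteField.pow_card, eval_ofNat, eval_sub, sub_self] at hcross hprod
  obtain ⟨y, hy⟩ := exists_root W (algebraMap F L x)
  have hsq := sub_negY_sq_baseChange hy
  -- `hψ` is the vanishing at `x` of the 2-division polynomial, the value of `cross_eq` there.
  by_cases hψ : 4 * x ^ 3 + W.b₂ * x ^ 2 + 2 * W.b₄ * x + W.b₆ = 0
  · -- The fibre is one point of order two; both denominators vanish, each to order one.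
    have e : y = (Affine.baseChange W L).negY (algebraMap F L x) y := by
      rw [← sub_eq_zero, ← sq_eq_zero_iff, hsq, hψ, map_zero]
    have hyq : y ^ q = y := by
      rcases eq_or_eq_negY hy (equation_pow hy) with h | h
      · exact h
      · exact h.trans e.symm
    obtain ⟨z, rfl⟩ := exists_of_pow_card_eq hyq
    rw [card_fibre_of_eq (equation_map.mp hy)
      ((algebraMap F L).injective (by rw [e]; simp [Affine.negY]))]
    have hcr : (r 0).eval x * (s 1).eval x + (r 1).eval x * (s 0).eval x = 0 := by
      apply mul_left_cancel₀ hu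
      rw [hcross]; linear_combination hψ
    have h1 : (r 1).eval x = 0 → (s 1).eval x = 0 := fun h ↦ by
      simpa [h, eval_ne_zero_of_coprime hr h] using hcr
    have h2 : (s 1).eval x = 0 → (r 1).eval x = 0 := fun h ↦ by
      simpa [h, eval_ne_zero_of_coprime hs h] using hcr
    have h3 : (r 1).eval x = 0 ∨ (s 1).eval x = 0 := by simpa [hu] using hprod
    have := hr0.mpr (by tauto)
    have := hs0.mpr (by tauto)
    omega
  · -- The fibre over `L` has two points, and only one of the denominators vanishes.
    have hne : y ≠ (Affine.baseChange W L).negY (algebraMap F L x) y := by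
      intro e
      rw [← sub_eq_zero] at e
      rw [e] at hsq
      apply hψ
      apply (algebraMap F L).injective
      simpa using hsq.symm
    have hnot : ¬ ((r 1).eval x = 0 ∧ (s 1).eval x = 0) := by
      rintro ⟨h1, h2⟩
      rw [h1, h2] at hcross
      apply hψ
      linear_combination -hcross
    by_cases hyq : y ^ q = y
    · -- Both points are rational, and the denominator of `x(π - g)` has a double root.
      have h2 := hm x y hy
      rw [hyq] at h2
      obtain ⟨z, rfl⟩ := exists_of_pow_card_eq hyq
      rw [card_fibre_of_ne (equation_map.mp hy) (fun e ↦ hne (by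
        conv_lhs => rw [e]
        simp [Affine.negY]))]
      have h2 : (s 1).eval x = 0 := by simpa [-Affine.negY, sub_ne_zero.mpr hne] using h2
      have := hr0.not.mpr (by tauto)
      omega
    · -- Frobenius exchanges the two points, and the double root is that of `x(π + g)`.
      have h2 : (r 1).eval x = 0 := by simpa [sub_eq_zero, hyq] using hp x y hy
      have := hs0.not.mpr (by tauto)
      have hE : IsEmpty {y : F // W.Equation x y} := by
        refine ⟨fun ⟨z, hz⟩ ↦ hyq ?_⟩
        rcases eq_or_eq_negY (equation_map.mpr hz) hy with e | e
        · rw [e, ← map_pow, FiniteField.pow_card]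
        · rw [e]
          have : (Affine.baseChange W L).negY (algebraMap F L x) (algebraMap F L z) =
            algebraMap F L (W.negY x z) := by simp [Affine.negY]
          rw [this, ← map_pow, FiniteField.pow_card]
      rw [Nat.card_of_isEmpty]
      omega

/-- The denominator splits over `F`, so its degree is the sum over `F` of its root multiplicities. -/
lemma natDegree_denom {a b : F[X]} (h : C u * (a * b) = (X ^ q - X) ^ 2)
    (hb : ∀ x, b.rootMultiplicity x = Nat.card {y : F // W.Equation x y}) :
    b.natDegree = Nat.card {P : F × F // W.Equation P.1 P.2} := by
  classical
  have h0 : (X ^ q - X : F[X]) ^ 2 ≠ 0 :=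
    pow_ne_zero 2 (FiniteField.X_pow_card_sub_X_ne_zero F Fintype.one_lt_card)
  have hs : (X ^ q - X : F[X]).Splits := by
    rw [X_pow_sub_X_eq_prod]
    exact Splits.prod fun a _ ↦ Splits.X_sub_C a
  have hbs : b.Splits := (hs.pow 2).of_dvd h0 ⟨C u * a, by rw [← h]; ring⟩
  rw [hbs.natDegree_eq_card_roots, ← Multiset.sum_count_eq_card (s := Finset.univ) (by simp)]
  simp only [count_roots, hb]
  rw [← Nat.card_sigma]
  exact Nat.card_congr ⟨fun P ↦ ⟨(P.1, P.2.1), P.2.2⟩, fun P ↦ ⟨P.1.1, P.1.2, P.2⟩,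
    fun _ ↦ rfl, fun _ ↦ rfl⟩

/-- The function `x(π - g)` has a simple pole at infinity as a function of `x`. The product and the sum of
`x(π + g)` and `x(π - g)` have orders of growth two and at most one, which forces order one for each. -/
lemma natDegree_num (hu : u ≠ 0)
    (h : ∀ i, addSub (WeierstrassCurve.map W C) (sym2 ![X ^ q, 1] ![X, 1]) i = C u * sym2 r s i) :
    (s 0).natDegree = (s 1).natDegree + 1 := by
  have h1 : 1 < q := Fintype.one_lt_card
  have hCm : ∀ (c : F) (p : F[X]), (C c * p).natDegree ≤ p.natDegree := natDegree_C_mul_le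
  have hXX : (X ^ q * X : F[X]).natDegree = q + 1 := by rw [← pow_succ, natDegree_X_pow]
  have hX2 : ((X ^ q * X) ^ 2 : F[X]).natDegree = 2 * q + 2 := by rw [natDegree_pow, hXX]; ring
  have hXa : (X ^ q + X : F[X]).natDegree ≤ q := natDegree_add_le_of_degree_le (by simp) (by simp; omega)
  have eB := congrArg natDegree (denom_mul h)
  rw [natDegree_C_mul hu, natDegree_pow, FiniteField.X_pow_card_sub_X_natDegree_eq _ h1] at eB
  have eA := congrArg natDegree (num_mul h)
  have hsm : (C W.b₄ * (X ^ q * X) + C W.b₆ * (X ^ q + X) + C W.b₈ : F[X]).natDegree ≤ q + 1 := by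
    refine natDegree_add_le_of_degree_le (natDegree_add_le_of_degree_le ?_ ?_) (by simp)
    · exact (hCm _ _).trans hXX.le
    · exact (hCm _ _).trans (hXa.trans (by omega))
  rw [natDegree_C_mul hu, natDegree_sub_eq_left_of_natDegree_lt (by rw [hX2]; omega), hX2] at eA
  have eC : (r 0 * s 1 + r 1 * s 0).natDegree ≤ 2 * q + 1 := by
    rw [← natDegree_C_mul hu, cross_eq h]
    refine natDegree_add_le_of_degree_le (natDegree_add_le_of_degree_le
      (natDegree_add_le_of_degree_le ?_ ?_) ?_) (by simp)
    · refine (natDegree_mul_le_of_le (m := q) (n := q + 1) ?_ hXX.le).trans (by omega)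
      exact (hCm 2 _).trans hXa
    · exact (hCm _ _).trans (hXX.le.trans (by omega))
    · exact (hCm _ _).trans (hXa.trans (by omega))
  have hb : r 1 * s 1 ≠ 0 := by intro h; rw [h, natDegree_zero] at eB; omega
  have ha : r 0 * s 0 ≠ 0 := by intro h; rw [h, natDegree_zero] at eA; omega
  have hr0 := left_ne_zero_of_mul ha
  have hs0 := right_ne_zero_of_mul ha
  have hr1 := left_ne_zero_of_mul hb
  have hs1 := right_ne_zero_of_mul hb
  have d1 := natDegree_mul hr0 hs1
  have d2 := natDegree_mul hr1 hs0
  rw [natDegree_mul hr1 hs1] at eB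
  rw [natDegree_mul hr0 hs0] at eA
  -- The cross terms have degrees with sum `4q + 2`, while their sum has degree at most `2q + 1`.
  rcases lt_trichotomy (r 0 * s 1).natDegree (r 1 * s 0).natDegree with hlt | heq | hgt
  · rw [natDegree_add_eq_right_of_natDegree_lt hlt] at eC
    omega
  · omega
  · rw [natDegree_add_eq_left_of_natDegree_lt hgt] at eC
    omega

end Denominator

/-! ### The generic point and the Frobenius point -/

section Generic
open scoped Classical
variable {F : Type*} [Field F] {W : Affine F}

variable (W) in
/-- The function `x`. -/
noncomputable abbrev xK : W.FunctionField := algebraMap F[X] W.FunctionField X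

variable (W) in
/-- The function `y`. -/
noncomputable abbrev yK : W.FunctionField := algebraMap W.CoordinateRing W.FunctionField (yR W)

variable (W) in
/-- The curve over its own function field. -/
noncomputable abbrev WK : Affine W.FunctionField := Affine.baseChange W W.FunctionField

lemma WK_Δ (hW : W.Δ ≠ 0) : (WK W).Δ ≠ 0 := by
  have hE : WK W = WeierstrassCurve.map W (algebraMap F W.FunctionField) := rfl
  rw [hE]; simpa using hW

lemma algebraMap_C (a : F) : algebraMap F[X] W.FunctionField (C a) = algebraMap F W.FunctionField a := by
  rw [← Polynomial.algebraMap_eq, ← IsScalarTower.algebraMap_apply]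

lemma equation_gen : (WK W).Equation (xK W) (yK W) := by
  rw [Affine.equation_iff]
  have h := congrArg (algebraMap W.CoordinateRing W.FunctionField) (yR_sq (W := W))
  simp only [map_add, map_mul, map_pow, ← IsScalarTower.algebraMap_apply, algebraMap_C] at h
  change yK W ^ 2 + algebraMap F _ W.a₁ * xK W * yK W + algebraMap F _ W.a₃ * yK W =
    xK W ^ 3 + algebraMap F _ W.a₂ * xK W ^ 2 + algebraMap F _ W.a₄ * xK W + algebraMap F _ W.a₆
  linear_combination h

/-- The generic point `g = (x, y)`. -/
noncomputable def gen (hW : W.Δ ≠ 0) : GenPoint W :=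
  .some (xK W) (yK W) ((Affine.equation_iff_nonsingular_of_Δ_ne_zero (WK_Δ hW)).mp equation_gen)

lemma involK_yK : involK W (yK W) = (WK W).negY (xK W) (yK W) := by
  rw [involK_algebraMap, invol_yR]
  simp only [map_sub, map_neg, ← IsScalarTower.algebraMap_apply, map_add, map_mul, algebraMap_C]
  change _ = - yK W - algebraMap F _ W.a₁ * xK W - algebraMap F _ W.a₃
  ring

lemma map_gen (hW : W.Δ ≠ 0) : Affine.Point.map (W' := W) (involK W) (gen hW) = -gen hW := by
  rw [gen, Affine.Point.map_some, Affine.Point.neg_some, Affine.Point.some.injEq]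
  exact ⟨involK_algebraMap_poly X, involK_yK⟩

lemma rep_gen (hW : W.Δ ≠ 0) : Rep (gen hW) ![X, 1] := by
  refine ⟨by simp [isCoprime_one_right], 1, one_ne_zero, fun i ↦ ?_⟩
  rw [gen, Affine.Point.xRep_some]
  fin_cases i <;> simp

lemma ht_gen (hW : W.Δ ≠ 0) : Ht (gen hW) 1 := by
  refine ⟨_, rep_gen hW, fun i ↦ ?_, 0, by simp⟩
  fin_cases i <;> simp

/-- Denominators cleared in the chord formula for an x-coordinate equal to `a / b`. -/
lemma clear_slope {K : Type*} [Field K] {D N a₁ a₂ s t c a b : K} (hD : D ≠ 0)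
    (h : (N / D) ^ 2 + a₁ * (N / D) - a₂ - s - t = c * a) (h1 : 1 = c * b) :
    D ^ 2 * a = b * (N ^ 2 + a₁ * N * D - (a₂ + s + t) * D ^ 2) := by
  have hc : a = b * (c * a) := by linear_combination a * h1
  rw [hc, ← h]
  field_simp
  ring

variable [Fintype F]

local notation "q" => Fintype.card F

/-- The Frobenius point `π = (x ^ q, y ^ q)`, the image of the generic point under the `q`-power
endomorphism of the function field. -/
noncomputable def frob (hW : W.Δ ≠ 0) : GenPoint W :=
  Affine.Point.map (W' := W) (FiniteField.frobeniusAlgHom F W.FunctionField) (gen hW)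

lemma exists_frob (hW : W.Δ ≠ 0) : ∃ h, frob hW = .some (xK W ^ q) (yK W ^ q) h := ⟨_, rfl⟩

lemma map_frob (hW : W.Δ ≠ 0) : Affine.Point.map (W' := W) (involK W) (frob hW) = -frob hW := by
  have : (involK W).comp (FiniteField.frobeniusAlgHom F W.FunctionField) =
      (FiniteField.frobeniusAlgHom F W.FunctionField).comp (involK W) := by
    exact AlgHom.ext fun z ↦ by simp [FiniteField.coe_frobeniusAlgHom]
  rw [frob, Affine.Point.map_map, this, ← Affine.Point.map_map, map_gen, map_neg]

lemma rep_frob (hW : W.Δ ≠ 0) : Rep (frob hW) ![X ^ q, 1] := by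
  refine ⟨by simp [isCoprime_one_right], 1, one_ne_zero, fun i ↦ ?_⟩
  obtain ⟨h, e⟩ := exists_frob hW
  rw [e, Affine.Point.xRep_some]
  fin_cases i <;> simp

lemma exists_rep_comb (hW : W.Δ ≠ 0) (m n : ℤ) : ∃ v, Rep (m • frob hW + n • gen hW) v := by
  apply exists_rep_of_involK hW
  rw [map_add, map_zsmul, map_zsmul, map_frob, map_gen]
  simp only [smul_neg, neg_add]

/-- For `P = ± g`, with ordinate `y'`, the chord formula
`x(π + P) = ((y ^ q - y') / (x ^ q - x)) ^ 2 + ⋯`, with denominators cleared, is evaluated at a point of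
the curve with abscissa in `F`. There `x ^ q - x` vanishes, so the denominator of `x(π + P)` vanishes
unless `y ^ q` equals the ordinate of `P` there. -/
lemma rep_add_eval {L : Type*} [Field L] [Algebra F L] (hW : W.Δ ≠ 0) {y' : W.CoordinateRing}
    {P : GenPoint W} (hP : ∃ h, P = .some (xK W) (algebraMap _ _ y') h)
    {v : Fin 2 → F[X]} (hv : Rep (frob hW + P) v) (x : F) (ev : W.CoordinateRing →+* L)
    (hev : ∀ p : F[X], ev (algebraMap _ _ p) = algebraMap F L (p.eval x)) :
    algebraMap F L ((v 1).eval x) * (ev (yR W) ^ q - ev y') ^ 2 = 0 := by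
  obtain ⟨h₁, e₁⟩ := exists_frob hW
  obtain ⟨h₂, rfl⟩ := hP
  have hD : algebraMap F[X] W.FunctionField (X ^ q - X) ≠ 0 := by
    rw [Ne, map_eq_zero_iff _ algebraMap_K_injective]
    exact FiniteField.X_pow_card_sub_X_ne_zero F Fintype.one_lt_card
  have hx : xK W ^ q ≠ xK W := by simpa [sub_ne_zero] using hD
  obtain ⟨c, -, hc⟩ := hv.2
  rw [e₁, Affine.Point.add_of_X_ne hx, Affine.Point.xRep_some] at hc
  have hc0 := hc 0
  have hc1 := hc 1
  simp only [Matrix.cons_val] at hc0 hc1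
  rw [Affine.slope_of_X_ne hx, Affine.addX] at hc0
  have ha₁ : (WK W).a₁ = algebraMap W.CoordinateRing _ (algebraMap F[X] _ (C W.a₁)) := by
    rw [← IsScalarTower.algebraMap_apply, algebraMap_C]; rfl
  have ha₂ : (WK W).a₂ = algebraMap W.CoordinateRing _ (algebraMap F[X] _ (C W.a₂)) := by
    rw [← IsScalarTower.algebraMap_apply, algebraMap_C]; rfl
  have key : algebraMap F[X] W.CoordinateRing (X ^ q - X) ^ 2 * algebraMap _ _ (v 0) =
      algebraMap _ _ (v 1) * ((yR W ^ q - y') ^ 2 +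
        algebraMap _ _ (C W.a₁) * (yR W ^ q - y') * algebraMap F[X] _ (X ^ q - X) -
        algebraMap F[X] _ (C W.a₂ + X ^ q + X) * algebraMap F[X] _ (X ^ q - X) ^ 2) := by
    apply IsFractionRing.injective W.CoordinateRing W.FunctionField
    have := clear_slope (sub_ne_zero.mpr hx) hc0 hc1
    rw [ha₁, ha₂] at this
    simp only [map_mul, map_pow, map_add, map_sub, ← IsScalarTower.algebraMap_apply] at this ⊢
    exact this
  have key := congrArg ev key
  have h0 : ev (algebraMap _ _ (X ^ q - X : F[X])) = 0 := by
    rw [hev]; simp [FiniteField.pow_card]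
  have h1 : ev (yR W ^ q - y') = ev (yR W) ^ q - ev y' := by rw [map_sub, map_pow]
  rw [map_mul, map_mul, map_pow, h0, map_sub, map_add, map_mul, map_mul, map_mul, map_pow, map_pow,
    h0, h1, hev (v 1)] at key
  linear_combination -key

lemma ht_frob (hW : W.Δ ≠ 0) : Ht (frob hW) q := by
  refine ⟨_, rep_frob hW, fun i ↦ ?_, 0, by simp⟩
  fin_cases i <;> simp

/-- The height of `π - g` is the number of rational points, the point at infinity included. -/
lemma ht_frob_sub_gen (hW : W.Δ ≠ 0) :
    Ht (frob hW - gen hW) (Nat.card {P : F × F // W.Equation P.1 P.2} + 1) := by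
  obtain ⟨r, hr⟩ := exists_rep_comb hW 1 1
  obtain ⟨s, hs⟩ := exists_rep_comb hW 1 (-1)
  rw [one_smul, one_smul] at hr
  rw [one_smul, neg_smul, one_smul, ← sub_eq_add_neg] at hs
  obtain ⟨u, hu, h⟩ := (rep_frob hW).add_sub hW (rep_gen hW) hr hs
  let L := AlgebraicClosure F
  -- Evaluation of the coordinate ring at a point over `L`.
  have hev : ∀ (x : F) (y : L), (Affine.baseChange W L).Equation (algebraMap F L x) y →
      ∃ ev : W.CoordinateRing →+* L, (∀ p : F[X], ev (algebraMap _ _ p) =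
        algebraMap F L (p.eval x)) ∧ ev (yR W) = y := by
    intro x y hxy
    refine ⟨AdjoinRoot.lift ((algebraMap F L).comp (evalRingHom x)) y ?_,
      fun p ↦ AdjoinRoot.lift_of _, AdjoinRoot.lift_root _⟩
    rw [eval₂_polynomial]
    rw [Affine.equation_iff] at hxy
    have hE : Affine.baseChange W L = WeierstrassCurve.map W (algebraMap F L) := rfl
    rw [hE] at hxy
    simp at hxy ⊢
    linear_combination hxy
  have hb := rootMultiplicity_denom (L := L) hu h hr.1 hs.1 (fun x y hxy ↦ by
      obtain ⟨ev, h1, h2⟩ := hev x y hxy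
      have := rep_add_eval hW (y' := yR W) ⟨_, rfl⟩ hr x ev h1
      rwa [h2] at this) (fun x y hxy ↦ by
      obtain ⟨ev, h1, h2⟩ := hev x y hxy
      rw [sub_eq_add_neg] at hs
      have := rep_add_eval hW (y' := invol W (yR W)) (P := -gen hW) (by
        rw [gen, Affine.Point.neg_some, ← involK_algebraMap, involK_yK]
        exact ⟨_, rfl⟩) hs x ev h1
      rw [h2, invol_yR] at this
      convert this using 4
      rw [map_sub, map_neg, h2, h1]
      have hE : Affine.baseChange W L = WeierstrassCurve.map W (algebraMap F L) := rfl
      rw [hE]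
      simp [Affine.negY]
      ring)
  have hd1 := natDegree_denom (denom_mul h) hb
  have hd0 := natDegree_num hu h
  rw [hd1] at hd0
  refine ⟨s, hs, fun i ↦ ?_, 0, ?_⟩
  · fin_cases i
    · exact hd0.le
    · exact hd1.le.trans (Nat.le_succ _)
  · rw [← hd0, coeff_natDegree, Ne, leadingCoeff_eq_zero]
    rintro h0
    rw [h0, natDegree_zero] at hd0
    omega

end Generic

/-! ### The height as a quadratic form -/

section QuadraticForm

/-- A sequence with vanishing second differences is zero if it has two consecutive zeros. -/
lemma eq_zero_of_affine {g : ℤ → ℤ} (h : ∀ m, g (m + 1) + g (m - 1) = 2 * g m) (a : ℤ)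
    (h0 : g a = 0) (h1 : g (a + 1) = 0) (m : ℤ) : g m = 0 := by
  have key : g m = 0 ∧ g (m + 1) = 0 := by
    induction m using Int.inductionOn' (b := a) with
    | zero => exact ⟨h0, h1⟩
    | succ k hk ih =>
      have := h (k + 1)
      rw [add_sub_cancel_right] at this
      exact ⟨ih.2, by linarith⟩
    | pred k hk ih =>
      have := h k
      rw [sub_add_cancel]
      exact ⟨by linarith, ih.1⟩
  exact key.1

/-- A nonnegative function on `ℤ²` satisfying the parallelogram law is the binary quadratic form
`am² + cmn + n²` determined by its values at `(1, 0)`, `(0, 1)` and `(1, -1)`, and its discriminant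
`c² - 4a` is at most zero. -/
lemma sq_le_of_parallelogram {H : ℤ → ℤ → ℤ} {a N : ℤ} (hH : ∀ m n, 0 ≤ H m n)
    (hp : ∀ m n m' n', H (m + m') (n + n') + H (m - m') (n - n') = 2 * H m n + 2 * H m' n')
    (h10 : H 1 0 = a) (h01 : H 0 1 = 1) (h11 : H 1 (-1) = N) : (N - (a + 1)) ^ 2 ≤ 4 * a := by
  set c := a + 1 - N with hc
  have h00 : H 0 0 = 0 := by have := hp 0 0 0 0; simp at this; linarith
  -- `G` is the difference of `H` and the form; it is affine in each variable separately.
  set G : ℤ → ℤ → ℤ := fun m n ↦ H m n - (a * m ^ 2 + n ^ 2 + c * m * n) with hG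
  have hGm : ∀ n m, G (m + 1) n + G (m - 1) n = 2 * G m n := fun n m ↦ by
    have := hp m n 1 0
    rw [add_zero, sub_zero, h10] at this
    simp only [hG]
    linear_combination this
  have hGn : ∀ m n, G m (n + 1) + G m (n - 1) = 2 * G m n := fun m n ↦ by
    have := hp m n 0 1
    rw [add_zero, sub_zero, h01] at this
    simp only [hG]
    linear_combination this
  have hG0 : ∀ n, G 0 n = 0 := eq_zero_of_affine (hGn 0) 0 (by simp [hG, h00]) (by simp [hG, h01])
  have hG1 : ∀ n, G 1 n = 0 :=
    eq_zero_of_affine (hGn 1) (-1) (by simp [hG, h11, hc]) (by simp [hG, h10])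
  -- The form at `(2, -c)` equals `4a - c²`, so `m = 2`, `n = -c` completes the square without fractions.
  have hform := eq_zero_of_affine (g := fun m ↦ G m (-c)) (hGm (-c)) 0 (hG0 _) (by rw [zero_add]; exact hG1 _) 2
  have := hH 2 (-c)
  simp only [hG] at hform
  nlinarith

end QuadraticForm

section Final
variable {F : Type*} [Field F] {W : Affine F}

lemma ht_zero : Ht (0 : GenPoint W) 0 := by
  refine ⟨![1, 0], ⟨by simp [isCoprime_one_left], 1, one_ne_zero, fun i ↦ ?_⟩, fun i ↦ ?_, 0, by simp⟩
  · rw [Affine.Point.xRep_zero]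
    fin_cases i <;> simp
  · fin_cases i <;> simp

lemma Ht.unique (hW : W.Δ ≠ 0) {P : GenPoint W} {m n : ℕ} (hm : Ht P m) (hn : Ht P n) : m = n := by
  classical
  have := hm.add_sub hW ht_zero (m := n) (n := n) (by rwa [add_zero]) (by rwa [sub_zero])
  omega

/-- The Hasse bound over an arbitrary finite field, as an inequality of integers. -/
theorem hasse [Fintype F] (hW : W.Δ ≠ 0) :
    ((Nat.card {P : F × F // W.Equation P.1 P.2} + 1 : ℤ) - (Fintype.card F + 1)) ^ 2 ≤
      4 * Fintype.card F := by
  classical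
  have hex : ∀ m n : ℤ, ∃ k, Ht (m • frob hW + n • gen hW) k := fun m n ↦ by
    obtain ⟨v, hv⟩ := exists_rep_comb hW m n
    obtain ⟨k, hk⟩ := hv.exists_ht
    exact ⟨k, v, hv, hk⟩
  choose H hH using hex
  refine sq_le_of_parallelogram (H := fun m n ↦ H m n) (fun m n ↦ by positivity)
    (fun m n m' n' ↦ ?_) ?_ ?_ ?_
  · have := (hH m n).add_sub hW (hH m' n') (m := H (m + m') (n + n')) (n := H (m - m') (n - n'))
      (by convert hH (m + m') (n + n') using 1; module) (by convert hH (m - m') (n - n') using 1; module)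
    exact_mod_cast this
  · have := (hH 1 0).unique hW (by simpa using ht_frob hW)
    exact_mod_cast this
  · have := (hH 0 1).unique hW (by simpa using ht_gen hW)
    exact_mod_cast this
  · have := (hH 1 (-1)).unique hW (by
      rw [one_smul, neg_smul, one_smul, ← sub_eq_add_neg]; exact ht_frob_sub_gen hW)
    rw [this, Nat.cast_add, Nat.cast_one]

end Final

end HasseBound

theorem hasse_bound (p k : ℕ) [Fact p.Prime] (hk : k ≠ 0)
    (W : WeierstrassCurve (GaloisField p k)) (hΔ : W.Δ ≠ 0) :
    |(weierstrassPointCount W : ℝ) - (p ^ k + 1)| ≤ 2 * Real.sqrt (p ^ k) := by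
  have : Fintype (GaloisField p k) := Fintype.ofFinite _
  have hcard : Fintype.card (GaloisField p k) = p ^ k := by
    rw [← Nat.card_eq_fintype_card, GaloisField.card p k hk]
  have h := HasseBound.hasse (W := W.toAffine) hΔ
  rw [hcard] at h
  have h' : ((weierstrassPointCount W : ℝ) - (p ^ k + 1)) ^ 2 ≤ 4 * p ^ k := by
    rw [weierstrassPointCount, Nat.cast_add, Nat.cast_one, add_comm (1 : ℝ)]
    exact_mod_cast h
  have := Real.abs_le_sqrt h'
  rwa [Real.sqrt_mul (by norm_num), show (4 : ℝ) = 2 ^ 2 by norm_num,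
    Real.sqrt_sq (by norm_num)] at this
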